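/- For every s ≥ 0, setting x_s = φ_s(x₀), the limit D_s := lim_{t→∞} e^{−λt} (Dφ_t(x_s))₂ (the second row of the rescaled Jacobian of the flow at x_s) exists as a row vector and satisfies |D_s| ≤ 2 (claim in Section 4: uniform bound on the derivative limits along the stable trajectory). -/

import Mathlib

/-!
On a small ball the Hartman chart turns the flow into `e^{Bt}`. Since `φ_t x₀ → 0`, the unstable
coordinate of `h x₀` vanishes (`SaddleFlow.unstable_coord_eq_zero`), so `e^{Bt} h x₀` has norm at
most `‖h x₀‖ ≤ δ/4` for `t ≥ 0`. Applying `h⁻¹` bounds the orbit by `δ/2` whenever it lies in the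
`δ`-ball, and the intermediate value theorem then shows that it never leaves
(`SaddleFlow.norm_phi_le`).

At a point `x = φ_s x₀` the identity `φ_t = h⁻¹ ∘ e^{Bt} ∘ h` holds near `x`, so
`Dφ_t(x) = Dh⁻¹(h(φ_t x)) e^{Bt} Dh(x)`. As `t → ∞` we have `Dh⁻¹(h(φ_t x)) → Dh⁻¹(0) = I` and
`e^{-λt} e^{Bt} → diag(0, 1)`. The limiting row is therefore the second row of `Dh(x)`, whose norm
is at most `‖I‖ + 1/2 < 2`.
-/

open Filter Topology Metric Real RealInnerProductSpace

noncomputable section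

/-- An element of `ℝ²` (with the Euclidean norm) with given coordinates. -/
def vec2 (a b : ℝ) : EuclideanSpace ℝ (Fin 2) := (WithLp.equiv 2 (Fin 2 → ℝ)).symm ![a, b]

/-- The setup of Turner, "Convergence of Markov processes near saddle fixed points",
Section 3: a saddle-type vector field `b x = B x + τ x` with `B = diag(-μ, λ)`,
a flow `φ` for `b`, a Hartman linearization `h` on a neighbourhood `U` of `0`,
and a radius `δ` on which `h` is close to the identity. -/
structure SaddleFlow where
  lam : ℝ
  mu : ℝ
  lam_pos : 0 < lam
  mu_pos : 0 < mu
  /-- the nonlinearity τ -/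
  tau : EuclideanSpace ℝ (Fin 2) → EuclideanSpace ℝ (Fin 2)
  tau_smooth : ContDiff ℝ 2 tau
  tau_zero : tau 0 = 0
  dtau_zero : fderiv ℝ tau 0 = 0
  /-- the flow of `b x = B x + τ x` -/
  phi : ℝ → EuclideanSpace ℝ (Fin 2) → EuclideanSpace ℝ (Fin 2)
  phi_zero : ∀ x, phi 0 x = x
  phi_hasDerivAt : ∀ t x, HasDerivAt (fun s => phi s x)
      (vec2 (-mu * (phi t x) 0) (lam * (phi t x) 1) + tau (phi t x)) t
  phi_add : ∀ t s x, phi (t + s) x = phi t (phi s x)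
  phi_contDiff : ∀ t, ContDiff ℝ 1 (phi t)
  /-- the domain of the Hartman linearization -/
  U : Set (EuclideanSpace ℝ (Fin 2))
  U_open : IsOpen U
  U_mem : (0 : EuclideanSpace ℝ (Fin 2)) ∈ U
  /-- the linearizing C¹ diffeomorphism `h : U → V = h '' U` and its inverse -/
  h : EuclideanSpace ℝ (Fin 2) → EuclideanSpace ℝ (Fin 2)
  hinv : EuclideanSpace ℝ (Fin 2) → EuclideanSpace ℝ (Fin 2)
  h_smooth : ∀ x ∈ U, ContDiffAt ℝ 1 h x
  hinv_smooth : ∀ y ∈ h '' U, ContDiffAt ℝ 1 hinv y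
  V_open : IsOpen (h '' U)
  left_inv : ∀ x ∈ U, hinv (h x) = x
  right_inv : ∀ y ∈ h '' U, h (hinv y) = y
  /-- the Hölder exponent of the partial derivatives of `h`, `h⁻¹` -/
  alpha0 : ℝ
  alpha0_mem : alpha0 ∈ Set.Ioc (0 : ℝ) 1
  holder : ∃ C : ℝ,
      (∀ x ∈ U, ∀ y ∈ U, ‖fderiv ℝ h x - fderiv ℝ h y‖ ≤ C * ‖x - y‖ ^ alpha0) ∧
      (∀ x ∈ h '' U, ∀ y ∈ h '' U,
        ‖fderiv ℝ hinv x - fderiv ℝ hinv y‖ ≤ C * ‖x - y‖ ^ alpha0)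
  /-- `h x = x + o(|x|)` as `x → 0` -/
  h_littleO : (fun x => h x - x) =o[𝓝 (0 : EuclideanSpace ℝ (Fin 2))] (fun x => x)
  /-- the conjugation `h (φ_t x) = e^{Bt} (h x)` -/
  h_conj : ∀ t x, x ∈ U → phi t x ∈ U →
      h (phi t x) = vec2 (Real.exp (-mu * t) * (h x) 0) (Real.exp (lam * t) * (h x) 1)
  /-- the radius δ -/
  delta : ℝ
  delta_pos : 0 < delta
  delta_lt_one : delta < 1
  ball_sub : closedBall (0 : EuclideanSpace ℝ (Fin 2)) delta ⊆ U ∩ h '' U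
  /-- `sup_{0<|x|<δ} max(|h x|/|x|, |h⁻¹ x|/|x|) < 2` -/
  h_ratio : ∃ c : ℝ, c < 2 ∧ ∀ x : EuclideanSpace ℝ (Fin 2), ‖x‖ < delta →
      ‖h x‖ ≤ c * ‖x‖ ∧ ‖hinv x‖ ≤ c * ‖x‖
  /-- `sup_{|x|<δ} max(‖Dh(x) − I‖, ‖Dh⁻¹(x) − I‖) < 1/2` -/
  deriv_close : ∃ c : ℝ, c < 1/2 ∧ ∀ x : EuclideanSpace ℝ (Fin 2), ‖x‖ < delta →
      ‖fderiv ℝ h x - ContinuousLinearMap.id ℝ (EuclideanSpace ℝ (Fin 2))‖ ≤ c ∧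
      ‖fderiv ℝ hinv x - ContinuousLinearMap.id ℝ (EuclideanSpace ℝ (Fin 2))‖ ≤ c

local notation "E2" => EuclideanSpace ℝ (Fin 2)

@[simp] lemma vec2_apply_zero (a b : ℝ) : vec2 a b 0 = a := rfl

@[simp] lemma vec2_apply_one (a b : ℝ) : vec2 a b 1 = b := rfl

lemma continuous_vec2 : Continuous fun p : ℝ × ℝ => vec2 p.1 p.2 := by
  unfold vec2
  refine (PiLp.continuous_toLp 2 (fun _ : Fin 2 => ℝ)).comp ?_
  refine continuous_pi fun i => ?_
  fin_cases i
  · exact continuous_fst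
  · exact continuous_snd

/-- The diagonal operator `diag(a, b)` on `ℝ²`. -/
def diagCLM (a b : ℝ) : E2 →L[ℝ] E2 :=
  LinearMap.toContinuousLinearMap
    { toFun := fun x => vec2 (a * x 0) (b * x 1)
      map_add' := by
        intro x y
        ext i
        fin_cases i <;> simp [mul_add]
      map_smul' := by
        intro c x
        ext i
        fin_cases i <;> simp [mul_left_comm] }

lemma diagCLM_apply (a b : ℝ) (x : E2) : diagCLM a b x = vec2 (a * x 0) (b * x 1) := rfl

/-- A diagonal map that contracts the first axis does not increase the norm of a vector on it. -/
lemma norm_diagCLM_le {a b : ℝ} (ha0 : 0 ≤ a) (ha1 : a ≤ 1) {x : E2} (hx : x 1 = 0) :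
    ‖diagCLM a b x‖ ≤ ‖x‖ := by
  rw [diagCLM_apply, EuclideanSpace.norm_eq, EuclideanSpace.norm_eq]
  apply Real.sqrt_le_sqrt
  simp only [Fin.sum_univ_two, vec2_apply_zero, vec2_apply_one, hx, mul_zero, norm_mul]
  gcongr
  rw [Real.norm_of_nonneg ha0]
  exact mul_le_of_le_one_left (norm_nonneg _) ha1

namespace SaddleFlow

variable (S : SaddleFlow)

lemma ball_subset_U {x : E2} (hx : ‖x‖ < S.delta) : x ∈ S.U :=
  (S.ball_sub (by simpa using hx.le)).1

lemma ball_subset_V {x : E2} (hx : ‖x‖ < S.delta) : x ∈ S.h '' S.U :=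
  (S.ball_sub (by simpa using hx.le)).2

lemma norm_h_le {x : E2} (hx : ‖x‖ < S.delta) : ‖S.h x‖ ≤ 2 * ‖x‖ := by
  obtain ⟨c, hc, H⟩ := S.h_ratio
  exact (H x hx).1.trans (by gcongr)

lemma norm_hinv_le {x : E2} (hx : ‖x‖ < S.delta) : ‖S.hinv x‖ ≤ 2 * ‖x‖ := by
  obtain ⟨c, hc, H⟩ := S.h_ratio
  exact (H x hx).2.trans (by gcongr)

lemma h_map_zero : S.h 0 = 0 := by
  have := S.norm_h_le (x := 0) (by simpa using S.delta_pos)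
  simpa using this

lemma hasFDerivAt_h {x : E2} (hx : x ∈ S.U) : HasFDerivAt S.h (fderiv ℝ S.h x) x :=
  ((S.h_smooth x hx).differentiableAt (by norm_num)).hasFDerivAt

lemma hasFDerivAt_hinv {y : E2} (hy : y ∈ S.h '' S.U) :
    HasFDerivAt S.hinv (fderiv ℝ S.hinv y) y :=
  ((S.hinv_smooth y hy).differentiableAt (by norm_num)).hasFDerivAt

lemma fderiv_hinv_zero : fderiv ℝ S.hinv 0 = ContinuousLinearMap.id ℝ E2 := by
  have h1 : HasFDerivAt S.h (ContinuousLinearMap.id ℝ E2) 0 := by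
    refine HasFDerivAt.of_isLittleO ?_
    simpa [S.h_map_zero] using S.h_littleO
  have h2 : HasFDerivAt S.hinv (fderiv ℝ S.hinv 0) (S.h 0) := by
    rw [S.h_map_zero]
    exact S.hasFDerivAt_hinv ⟨0, S.U_mem, S.h_map_zero⟩
  have h3 : HasFDerivAt (S.hinv ∘ S.h) (ContinuousLinearMap.id ℝ E2) 0 := by
    refine (hasFDerivAt_id (𝕜 := ℝ) (0 : E2)).congr_of_eventuallyEq ?_
    filter_upwards [S.U_open.mem_nhds S.U_mem] with x hx
    exact S.left_inv x hx
  simpa using (h2.comp (0 : E2) h1).unique h3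

lemma continuousAt_fderiv_hinv_zero : ContinuousAt (fderiv ℝ S.hinv) 0 :=
  (S.hinv_smooth 0 ⟨0, S.U_mem, S.h_map_zero⟩).continuousAt_fderiv (by norm_num)

lemma h_conj_diag {t : ℝ} {x : E2} (hx : x ∈ S.U) (hφ : S.phi t x ∈ S.U) :
    S.h (S.phi t x) = diagCLM (exp (-S.mu * t)) (exp (S.lam * t)) (S.h x) :=
  S.h_conj t x hx hφ

lemma tendsto_h_zero {x : E2} (hst : Tendsto (fun t => S.phi t x) atTop (𝓝 0)) :
    Tendsto (fun t => S.h (S.phi t x)) atTop (𝓝 0) := by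
  have hc : ContinuousAt S.h 0 := (S.h_smooth 0 S.U_mem).continuousAt
  have := hc.tendsto.comp hst
  rwa [S.h_map_zero] at this

/-- A point on the stable trajectory has no unstable component in the linearizing chart. -/
lemma unstable_coord_eq_zero {x : E2} (hx : x ∈ S.U)
    (hst : Tendsto (fun t => S.phi t x) atTop (𝓝 0)) : S.h x 1 = 0 := by
  have h1 : Tendsto (fun t => S.h (S.phi t x) 1) atTop (𝓝 0) := by
    have hc : Continuous fun y : E2 => y 1 := by fun_prop
    simpa [Function.comp_def] using (hc.tendsto 0).comp (S.tendsto_h_zero hst)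
  have h2 : Tendsto (fun _ : ℝ => |S.h x 1|) atTop (𝓝 0) := by
    refine tendsto_of_tendsto_of_tendsto_of_le_of_le' tendsto_const_nhds
      (by simpa using h1.abs) (Eventually.of_forall fun _ => abs_nonneg _) ?_
    filter_upwards [hst.eventually (S.U_open.mem_nhds S.U_mem), eventually_ge_atTop 0]
      with t ht ht0
    rw [S.h_conj_diag hx ht, diagCLM_apply, vec2_apply_one, abs_mul, abs_of_pos (exp_pos _)]
    exact le_mul_of_one_le_left (abs_nonneg _)
      (one_le_exp (mul_nonneg S.lam_pos.le ht0))
  exact abs_eq_zero.1 (tendsto_nhds_unique tendsto_const_nhds h2)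

/-- The forward orbit of a stable point of norm less than `δ/8` stays in the `δ/2`-ball. -/
lemma norm_phi_le {x₀ : E2} (hx₀ : ‖x₀‖ < S.delta / 8)
    (hst : Tendsto (fun t => S.phi t x₀) atTop (𝓝 0)) {s : ℝ} (hs : 0 ≤ s) :
    ‖S.phi s x₀‖ ≤ S.delta / 2 := by
  have hδ := S.delta_pos
  have hx₀' : ‖x₀‖ < S.delta := by linarith
  have hxU := S.ball_subset_U hx₀'
  have hz := S.unstable_coord_eq_zero hxU hst
  have hgap : ∀ r, 0 ≤ r → ‖S.phi r x₀‖ < S.delta → ‖S.phi r x₀‖ ≤ S.delta / 2 := by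
    intro r hr hlt
    have hU := S.ball_subset_U hlt
    have hnorm : ‖S.h (S.phi r x₀)‖ ≤ S.delta / 4 := by
      rw [S.h_conj_diag hxU hU]
      refine (norm_diagCLM_le (exp_pos _).le ?_ hz).trans ?_
      · rw [exp_le_one_iff]
        nlinarith [S.mu_pos]
      · linarith [S.norm_h_le hx₀']
    have := S.norm_hinv_le (x := S.h (S.phi r x₀)) (by linarith)
    rw [S.left_inv _ hU] at this
    linarith
  by_contra! hcon
  have hge : S.delta ≤ ‖S.phi s x₀‖ := by
    by_contra! hlt
    exact hcon.not_ge (hgap s hs hlt)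
  have hcont : Continuous fun r => ‖S.phi r x₀‖ :=
    (continuous_iff_continuousAt.2 fun r => (S.phi_hasDerivAt r x₀).continuousAt).norm
  -- The value `3δ/4` lies in the gap `(δ/2, δ)` that the norm along the orbit cannot meet.
  obtain ⟨r, hr, hr'⟩ := intermediate_value_Icc hs hcont.continuousOn
    (show 3 * S.delta / 4 ∈ Set.Icc _ _ from ⟨by rw [S.phi_zero]; linarith, by linarith⟩)
  have := hgap r hr.1 (by simp only at hr'; linarith)
  simp only at hr'
  linarith

/-- The chain rule for `φ_t = h⁻¹ ∘ e^{Bt} ∘ h`. -/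
lemma fderiv_phi {t : ℝ} {x : E2} (hx : x ∈ S.U) (hφ : S.phi t x ∈ S.U) (z : E2) :
    fderiv ℝ (S.phi t) x z = fderiv ℝ S.hinv (S.h (S.phi t x))
      (diagCLM (exp (-S.mu * t)) (exp (S.lam * t)) (fderiv ℝ S.h x z)) := by
  set L := diagCLM (exp (-S.mu * t)) (exp (S.lam * t)) with hL
  have h1 := (S.hasFDerivAt_hinv ⟨_, hφ, rfl⟩)
  have h2 : HasFDerivAt (fun y => L (S.h y)) (L.comp (fderiv ℝ S.h x)) x :=
    L.hasFDerivAt.comp x (S.hasFDerivAt_h hx)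
  have hev : S.phi t =ᶠ[𝓝 x] S.hinv ∘ fun y => L (S.h y) := by
    have hc : ContinuousAt (S.phi t) x := (S.phi_contDiff t).continuous.continuousAt
    filter_upwards [S.U_open.mem_nhds hx, hc.preimage_mem_nhds (S.U_open.mem_nhds hφ)]
      with y hy hy'
    rw [Function.comp_apply, hL, ← S.h_conj_diag hy hy', S.left_inv _ hy']
  rw [S.h_conj_diag hx hφ] at h1 ⊢
  rw [((h1.comp x h2).congr_of_eventuallyEq hev).fderiv]
  rfl

/-- The second row of `e^{-λt} Dφ_t(x)` converges to that of `Dh(x)` when the forward orbit of `x`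
stays in the chart domain and converges to `0`. -/
lemma tendsto_row {x : E2} (hU : ∀ t, 0 ≤ t → S.phi t x ∈ S.U)
    (hst : Tendsto (fun t => S.phi t x) atTop (𝓝 0)) (z : E2) :
    Tendsto (fun t => exp (-S.lam * t) * (fderiv ℝ (S.phi t) x z) 1) atTop
      (𝓝 (fderiv ℝ S.h x z 1)) := by
  have hx : x ∈ S.U := by simpa [S.phi_zero] using hU 0 le_rfl
  set v := fderiv ℝ S.h x z
  have hA : Tendsto (fun t => fderiv ℝ S.hinv (S.h (S.phi t x))) atTop
      (𝓝 (ContinuousLinearMap.id ℝ E2)) := by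
    have := S.continuousAt_fderiv_hinv_zero.tendsto.comp (S.tendsto_h_zero hst)
    rwa [S.fderiv_hinv_zero] at this
  have hw : Tendsto (fun t => vec2 (exp (-(S.lam + S.mu) * t) * v 0) (v 1)) atTop
      (𝓝 (vec2 0 (v 1))) := by
    have he : Tendsto (fun t => exp (-(S.lam + S.mu) * t)) atTop (𝓝 0) := by
      refine tendsto_exp_atBot.comp (tendsto_id.const_mul_atTop_of_neg ?_)
      linarith [S.lam_pos, S.mu_pos]
    have h0 : Tendsto (fun t => exp (-(S.lam + S.mu) * t) * v 0) atTop (𝓝 0) := by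
      simpa using he.mul_const (v 0)
    exact (continuous_vec2.tendsto (0, v 1)).comp (h0.prodMk_nhds tendsto_const_nhds)
  have hc : Continuous fun y : E2 => y 1 := by fun_prop
  have hAw : Tendsto (fun t => fderiv ℝ S.hinv (S.h (S.phi t x))
      (vec2 (exp (-(S.lam + S.mu) * t) * v 0) (v 1))) atTop (𝓝 (vec2 0 (v 1))) :=
    (isBoundedBilinearMap_apply.continuous.tendsto
      (ContinuousLinearMap.id ℝ E2, vec2 0 (v 1))).comp (hA.prodMk_nhds hw)
  have hlim := (hc.tendsto _).comp hAw
  refine Tendsto.congr' ?_ hlim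
  filter_upwards [eventually_ge_atTop 0] with t ht
  have hscale : vec2 (exp (-(S.lam + S.mu) * t) * v 0) (v 1)
      = exp (-S.lam * t) • diagCLM (exp (-S.mu * t)) (exp (S.lam * t)) v := by
    ext i
    fin_cases i
    · simp [diagCLM_apply, ← mul_assoc, ← exp_add]
      left
      ring
    · simp [diagCLM_apply, ← mul_assoc, ← exp_add]
  rw [S.fderiv_phi hx (hU t ht), Function.comp_apply, hscale, map_smul]
  rfl

lemma norm_fderiv_h_le {x : E2} (hx : ‖x‖ < S.delta) : ‖fderiv ℝ S.h x‖ ≤ 2 := by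
  obtain ⟨c, hc, H⟩ := S.deriv_close
  have h1 := (H x hx).1
  have h2 : ‖ContinuousLinearMap.id ℝ E2‖ ≤ 1 := ContinuousLinearMap.norm_id_le
  have h3 := norm_add_le (fderiv ℝ S.h x - ContinuousLinearMap.id ℝ E2)
    (ContinuousLinearMap.id ℝ E2)
  rw [sub_add_cancel] at h3
  linarith

end SaddleFlow

/-- Claim in Section 4: for every `s ≥ 0`, with `x_s = φ_s(x₀)`, the limit
`D_s = lim_{t→∞} e^{−λt} (Dφ_t(x_s))₂` of the second row of the rescaled Jacobian exists
(as a row vector, represented via the inner product) and satisfies `|D_s| ≤ 2`. -/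
theorem row_limit_along_stable_trajectory (S : SaddleFlow) (x₀ : EuclideanSpace ℝ (Fin 2))
    (hx₀_pos : 0 < ‖x₀‖) (hx₀_lt : ‖x₀‖ < S.delta / 8)
    (hx₀_stable : Tendsto (fun t => S.phi t x₀) atTop (𝓝 (0 : EuclideanSpace ℝ (Fin 2)))) :
    ∀ s : ℝ, 0 ≤ s → ∃ Ds : EuclideanSpace ℝ (Fin 2), ‖Ds‖ ≤ 2 ∧
      ∀ z : EuclideanSpace ℝ (Fin 2),
        Tendsto (fun t => Real.exp (-S.lam * t) * (fderiv ℝ (S.phi t) (S.phi s x₀) z) 1)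
          atTop (𝓝 ⟪Ds, z⟫) := by
  intro s hs
  have hball : ∀ r, 0 ≤ r → ‖S.phi r x₀‖ < S.delta := fun r hr =>
    (S.norm_phi_le hx₀_lt hx₀_stable hr).trans_lt (by linarith [S.delta_pos])
  have hst : Tendsto (fun t => S.phi t (S.phi s x₀)) atTop (𝓝 0) := by
    simp_rw [← S.phi_add]
    exact hx₀_stable.comp (tendsto_atTop_add_const_right _ s tendsto_id)
  have hU : ∀ t, 0 ≤ t → S.phi t (S.phi s x₀) ∈ S.U := fun t ht => by
    rw [← S.phi_add]
    exact S.ball_subset_U (hball _ (by linarith))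
  let ℓ : EuclideanSpace ℝ (Fin 2) →L[ℝ] ℝ :=
    (EuclideanSpace.proj (1 : Fin 2)).comp (fderiv ℝ S.h (S.phi s x₀))
  have hℓ : ‖ℓ‖ ≤ 2 := by
    refine ContinuousLinearMap.opNorm_le_bound _ (by norm_num) fun z => ?_
    calc ‖ℓ z‖ ≤ ‖fderiv ℝ S.h (S.phi s x₀) z‖ := PiLp.norm_apply_le _ 1
      _ ≤ ‖fderiv ℝ S.h (S.phi s x₀)‖ * ‖z‖ := ContinuousLinearMap.le_opNorm _ _
      _ ≤ 2 * ‖z‖ := by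
        gcongr
        exact S.norm_fderiv_h_le (hball s hs)
  refine ⟨(InnerProductSpace.toDual ℝ _).symm ℓ, ?_, fun z => ?_⟩
  · rwa [LinearIsometryEquiv.norm_map]
  · rw [InnerProductSpace.toDual_symm_apply]
    exact S.tendsto_row hU hst z
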